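/- Let n ≥ 2. For every configuration of n regions on ℝ with density |x| there exists a condensed configuration of n regions with the same list of weighted masses, consisting of at most 2n − 2 intervals, whose total weighted perimeter is at most that of the original configuration. (Consequently, an isoperimetric n-bubble is in condensed form and has at most 2n − 2 adjacent intervals.) -/

import Mathlib

open MeasureTheory Finset

/-- A configuration of `n` regions made of `k` nondegenerate closed intervals
with pairwise disjoint interiors, each interval labeled by one of the regions. -/
structure Config (n k : ℕ) where
  lo : Fin k → ℝ
  hi : Fin k → ℝ
  lab : Fin k → Fin n
  nondeg : ∀ j, lo j < hi j
  disj : ∀ i j, i ≠ j → Set.Ioo (lo i) (hi i) ∩ Set.Ioo (lo j) (hi j) = ∅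

namespace Config

variable {n k : ℕ}

/-- Weighted mass of region `i` with respect to the density `|x|`. -/
noncomputable def mass (C : Config n k) (i : Fin n) : ℝ :=
  ∑ j ∈ univ.filter (fun j => C.lab j = i), ∫ x in C.lo j..C.hi j, |x|

/-- The (finite) set of all endpoints of intervals of the configuration. -/
noncomputable def endpointSet (C : Config n k) : Finset ℝ :=
  image C.lo univ ∪ image C.hi univ

/-- Total weighted perimeter with respect to the density `|x|`. -/
noncomputable def perim (C : Config n k) : ℝ :=
  ∑ x ∈ C.endpointSet, |x|

/-- A configuration is condensed if the union of its intervals is a closed interval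
containing `0` and each region has at most one interval contained in `(-∞,0]`
and at most one interval contained in `[0,∞)`. -/
def Condensed (C : Config n k) : Prop :=
  (∃ a b : ℝ, a ≤ 0 ∧ 0 ≤ b ∧ (⋃ j, Set.Icc (C.lo j) (C.hi j)) = Set.Icc a b) ∧
  ∀ i : Fin n,
    (univ.filter (fun j => C.lab j = i ∧ C.hi j ≤ 0)).card ≤ 1 ∧
    (univ.filter (fun j => C.lab j = i ∧ 0 ≤ C.lo j)).card ≤ 1

/-- A configuration is isoperimetric if its total weighted perimeter is least among all
configurations of `n` regions with the same list of weighted masses. -/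
def Isoperimetric (C : Config n k) : Prop :=
  ∀ (k' : ℕ) (C' : Config n k'), (∀ i, C'.mass i = C.mass i) → C.perim ≤ C'.perim

end Config

/-- The weighted length `∫ y in 0..x, |y|` of `[0, x]`, or `0` when `x ≤ 0`. -/
noncomputable def posPrimitive (x : ℝ) : ℝ := max x 0 ^ 2 / 2

lemma posPrimitive_nonneg (x : ℝ) : 0 ≤ posPrimitive x := by
  unfold posPrimitive; positivity

lemma posPrimitive_mono : Monotone posPrimitive := fun x y h => by
  unfold posPrimitive
  gcongr

lemma integral_zero_abs (b : ℝ) :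
    ∫ x in (0 : ℝ)..b, |x| = posPrimitive b - posPrimitive (-b) := by
  unfold posPrimitive
  rcases le_total 0 b with hb | hb
  · have h : ∫ x in (0 : ℝ)..b, |x| = ∫ x in (0 : ℝ)..b, x :=
      intervalIntegral.integral_congr fun x hx => by
        rw [Set.uIcc_of_le hb] at hx
        exact abs_of_nonneg hx.1
    rw [h, integral_id, max_eq_left hb, max_eq_right (neg_nonpos.2 hb)]
    ring
  · have h : ∫ x in (0 : ℝ)..b, |x| = ∫ x in (0 : ℝ)..b, -x :=
      intervalIntegral.integral_congr fun x hx => by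
        rw [Set.uIcc_of_ge hb] at hx
        exact abs_of_nonpos hx.2
    rw [h, intervalIntegral.integral_neg, integral_id, max_eq_right hb,
      max_eq_left (neg_nonneg.2 hb)]
    ring

lemma integral_abs_eq (a b : ℝ) :
    ∫ x in a..b, |x| =
      (posPrimitive b - posPrimitive a) + (posPrimitive (-a) - posPrimitive (-b)) := by
  rw [← intervalIntegral.integral_interval_sub_left (a := 0)
    (continuous_abs.intervalIntegrable _ _) (continuous_abs.intervalIntegrable _ _),
    integral_zero_abs, integral_zero_abs]
  ring

namespace Config

variable {n k : ℕ} (C : Config n k)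

lemma Ioo_inter_Ioo_eq_empty {a b c d : ℝ} (h : b ≤ c ∨ d ≤ a) :
    Set.Ioo a b ∩ Set.Ioo c d = ∅ := by
  rw [Set.Ioo_inter_Ioo, Set.Ioo_eq_empty_iff, not_lt]
  rcases h with h | h
  · exact (min_le_left _ _).trans (h.trans (le_max_right _ _))
  · exact (min_le_right _ _).trans (h.trans (le_max_left _ _))

lemma hi_le_lo_or {i j : Fin k} (hij : i ≠ j) : C.hi i ≤ C.lo j ∨ C.hi j ≤ C.lo i := by
  have h := C.disj i j hij
  rw [Set.Ioo_inter_Ioo, Set.Ioo_eq_empty_iff, not_lt, min_le_iff, le_max_iff, le_max_iff] at h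
  have hi := C.nondeg i
  have hj := C.nondeg j
  grind

lemma hi_injective : Function.Injective C.hi := fun i j h => by
  by_contra hij
  have hi := C.nondeg i
  have hj := C.nondeg j
  rcases C.hi_le_lo_or hij with h' | h' <;> linarith

lemma sum_posPrimitive_le (s : Finset (Fin k)) :
    ∀ t, (∀ j ∈ s, C.hi j ≤ t) →
      ∑ j ∈ s, (posPrimitive (C.hi j) - posPrimitive (C.lo j)) ≤ posPrimitive t := by
  induction s using Finset.induction_on_max_value C.hi with
  | empty => intro t _; simpa using posPrimitive_nonneg t
  | insert a s ha hmax ih =>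
    intro t ht
    rw [sum_insert ha]
    have h1 := ih (C.lo a) fun j hj => by
      have hne : j ≠ a := fun h => ha (h ▸ hj)
      rcases C.hi_le_lo_or hne with h | h
      · exact h
      · have := hmax j hj
        have := C.nondeg j
        linarith
    have h2 := posPrimitive_mono (ht a (mem_insert_self a s))
    linarith

/-- The part of the mass of region `i` lying in `[0, ∞)`. -/
noncomputable def rightMass (i : Fin n) : ℝ :=
  ∑ j ∈ univ.filter (fun j => C.lab j = i), (posPrimitive (C.hi j) - posPrimitive (C.lo j))

/-- The largest right endpoint of region `i`, or `0` if this is negative. -/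
noncomputable def rightEnd (i : Fin n) : ℝ :=
  (insert 0 (image C.hi (univ.filter fun j => C.lab j = i))).max' (insert_nonempty _ _)

lemma rightEnd_nonneg (i : Fin n) : 0 ≤ C.rightEnd i :=
  le_max' _ _ (mem_insert_self _ _)

lemma hi_le_rightEnd (j : Fin k) : C.hi j ≤ C.rightEnd (C.lab j) :=
  le_max' _ _ (mem_insert_of_mem (mem_image_of_mem _ (by simp)))

lemma exists_hi_eq_rightEnd {i : Fin n} (h : 0 < C.rightEnd i) :
    ∃ j, C.lab j = i ∧ C.hi j = C.rightEnd i := by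
  have hm : C.rightEnd i ∈ insert 0 (image C.hi (univ.filter fun j => C.lab j = i)) :=
    max'_mem _ _
  rcases mem_insert.1 hm with h0 | h0
  · exact absurd h0 h.ne'
  · simpa using h0

lemma rightMass_nonneg (i : Fin n) : 0 ≤ C.rightMass i :=
  sum_nonneg fun j _ => sub_nonneg.2 (posPrimitive_mono (C.nondeg j).le)

lemma sum_rightMass_le (s : Finset (Fin n)) (t : ℝ) (hs : ∀ i ∈ s, C.rightEnd i ≤ t) :
    ∑ i ∈ s, C.rightMass i ≤ posPrimitive t := by
  have h : ∑ i ∈ s, C.rightMass i =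
      ∑ j ∈ univ.filter (fun j => C.lab j ∈ s),
        (posPrimitive (C.hi j) - posPrimitive (C.lo j)) := by
    rw [← sum_fiberwise_of_maps_to (s := univ.filter fun j => C.lab j ∈ s) (t := s) (g := C.lab)
      (by simp)]
    refine sum_congr rfl fun i hi => ?_
    rw [rightMass, filter_filter]
    refine sum_congr (filter_congr fun j _ => ?_) fun _ _ => rfl
    exact ⟨fun h => ⟨h ▸ hi, h⟩, fun h => h.2⟩
  rw [h]
  exact C.sum_posPrimitive_le _ t fun j hj =>
    (C.hi_le_rightEnd j).trans (hs _ (mem_filter.1 hj).2)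

lemma sum_rightEnd_le :
    ∑ i, C.rightEnd i ≤ ∑ x ∈ C.endpointSet.filter (fun x => 0 < x), |x| := by
  have h1 : ∑ i, C.rightEnd i = ∑ i ∈ univ.filter (fun i => 0 < C.rightEnd i), C.rightEnd i := by
    symm
    refine sum_filter_of_ne fun i _ h => lt_of_le_of_ne (C.rightEnd_nonneg i) h.symm
  have hinj : Set.InjOn C.rightEnd (univ.filter fun i => 0 < C.rightEnd i) := by
    intro i hi i' hi' h
    simp only [coe_filter, mem_univ, true_and, Set.mem_ofPred_eq] at hi hi'
    obtain ⟨j, rfl, hj⟩ := C.exists_hi_eq_rightEnd hi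
    obtain ⟨j', rfl, hj'⟩ := C.exists_hi_eq_rightEnd hi'
    rw [C.hi_injective (hj.trans (h.trans hj'.symm))]
  have h2 : ∑ i ∈ univ.filter (fun i => 0 < C.rightEnd i), C.rightEnd i =
      ∑ x ∈ (univ.filter fun i => 0 < C.rightEnd i).image C.rightEnd, |x| := by
    rw [sum_image hinj]
    exact sum_congr rfl fun i _ => (abs_of_nonneg (C.rightEnd_nonneg i)).symm
  rw [h1, h2]
  refine sum_le_sum_of_subset_of_nonneg (fun x hx => ?_) fun _ _ _ => abs_nonneg _
  obtain ⟨i, hi, rfl⟩ := mem_image.1 hx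
  have hi := (mem_filter.1 hi).2
  obtain ⟨j, -, hj⟩ := C.exists_hi_eq_rightEnd hi
  exact mem_filter.2 ⟨mem_union_right _ (hj ▸ mem_image_of_mem _ (mem_univ j)), hi⟩

/-- The mirror image of a configuration in the origin. -/
noncomputable def reflect : Config n k where
  lo j := -C.hi j
  hi j := -C.lo j
  lab := C.lab
  nondeg j := neg_lt_neg (C.nondeg j)
  disj _ _ hij :=
    Ioo_inter_Ioo_eq_empty ((C.hi_le_lo_or hij).symm.imp neg_le_neg neg_le_neg)

lemma mass_eq (i : Fin n) : C.mass i = C.rightMass i + C.reflect.rightMass i := by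
  rw [mass, rightMass, rightMass]
  refine Eq.trans ?_ sum_add_distrib
  exact sum_congr rfl fun j _ => integral_abs_eq _ _

lemma mass_lab_pos (j : Fin k) : 0 < C.mass (C.lab j) := by
  refine sum_pos' (fun l _ => intervalIntegral.integral_nonneg (C.nondeg l).le fun _ _ =>
    abs_nonneg _) ⟨j, by simp, ?_⟩
  rw [integral_abs_eq]
  have h := C.nondeg j
  unfold posPrimitive
  rcases le_total 0 (C.lo j) with h0 | h0 <;> rcases le_total 0 (C.hi j) with h1 | h1 <;>
    simp only [max_eq_left, max_eq_right, neg_nonneg, neg_nonpos, h0, h1] <;>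
    nlinarith [sq_nonneg (C.hi j + C.lo j), mul_pos (sub_pos.2 h) (sub_pos.2 h)]

lemma perim_eq : C.perim = ∑ x ∈ C.endpointSet.filter (fun x => 0 < x), |x| +
    ∑ x ∈ C.reflect.endpointSet.filter (fun x => 0 < x), |x| := by
  have h1 : C.reflect.endpointSet = C.endpointSet.image Neg.neg := by
    rw [endpointSet, endpointSet, image_union, image_image, image_image, union_comm]
    rfl
  have h2 : ∑ x ∈ C.reflect.endpointSet.filter (fun x => 0 < x), |x| =
      ∑ x ∈ C.endpointSet.filter (fun x => ¬ 0 < x), |x| := by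
    rw [h1, filter_image, sum_image neg_injective.injOn]
    simp only [abs_neg, Left.neg_pos_iff]
    refine sum_subset (fun x hx => ?_) fun x hx hx' => ?_
    · have := mem_filter.1 hx
      exact mem_filter.2 ⟨this.1, not_lt.2 this.2.le⟩
    · have h := mem_filter.1 hx
      have : ¬ x < 0 := fun h0 => hx' (mem_filter.2 ⟨h.1, h0⟩)
      rw [le_antisymm (not_lt.1 h.2) (not_lt.1 this), abs_zero]
  rw [h2, perim, sum_filter_add_sum_filter_not]

end Config

section Stack

variable {ι α : Type*} [Fintype ι] [LinearOrder α]

/-- The outer endpoint of the `i`-th interval when intervals of weighted masses `w` are stacked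
on `[0, ∞)` starting at the origin in the order given by `ρ`. -/
noncomputable def stackOuter (ρ : ι → α) (w : ι → ℝ) (i : ι) : ℝ :=
  √(2 * ∑ j ∈ univ.filter (fun j => ρ j ≤ ρ i), w j)

/-- The inner endpoint of the `i`-th interval in the stack described in `stackOuter`. -/
noncomputable def stackInner (ρ : ι → α) (w : ι → ℝ) (i : ι) : ℝ :=
  √(2 * ∑ j ∈ univ.filter (fun j => ρ j < ρ i), w j)

lemma stackOuter_nonneg (ρ : ι → α) (w : ι → ℝ) (i : ι) : 0 ≤ stackOuter ρ w i :=
  Real.sqrt_nonneg _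

lemma stackInner_nonneg (ρ : ι → α) (w : ι → ℝ) (i : ι) : 0 ≤ stackInner ρ w i :=
  Real.sqrt_nonneg _

lemma concaveOn_stackOuter (ρ : ι → α) (i : ι) :
    ConcaveOn ℝ (Set.Ici 0) fun w => stackOuter ρ w i := by
  refine ⟨convex_Ici 0, fun x hx y hy a b ha hb hab => ?_⟩
  have h := Real.strictConcaveOn_sqrt.concaveOn.2
    (x := 2 * ∑ j ∈ univ.filter (fun j => ρ j ≤ ρ i), x j)
    (y := 2 * ∑ j ∈ univ.filter (fun j => ρ j ≤ ρ i), y j)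
    (mul_nonneg two_pos.le (sum_nonneg fun j _ => hx j))
    (mul_nonneg two_pos.le (sum_nonneg fun j _ => hy j)) ha hb hab
  refine h.trans_eq ?_
  simp only [stackOuter, Pi.add_apply, Pi.smul_apply, smul_eq_mul, sum_add_distrib, ← mul_sum]
  congr 1
  ring

lemma concaveOn_sum_stackOuter (ρ : ι → α) :
    ConcaveOn ℝ (Set.Ici 0) fun w => ∑ i, stackOuter ρ w i := by
  refine ⟨convex_Ici 0, fun x hx y hy a b ha hb hab => ?_⟩
  simp only [smul_eq_mul, mul_sum, ← sum_add_distrib]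
  exact sum_le_sum fun i _ => (concaveOn_stackOuter ρ i).2 hx hy ha hb hab

variable {ρ : ι → α} {w : ι → ℝ}

lemma stackOuter_le_stackInner (hw : 0 ≤ w) {i j : ι} (h : ρ i < ρ j) :
    stackOuter ρ w i ≤ stackInner ρ w j :=
  Real.sqrt_le_sqrt <| mul_le_mul_of_nonneg_left (sum_le_sum_of_subset_of_nonneg
    (monotone_filter_right _ fun _ _ h' => lt_of_le_of_lt h' h) fun l _ _ => hw l) two_pos.le

lemma stackOuter_sq (hρ : ρ.Injective) (hw : 0 ≤ w) (i : ι) :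
    stackOuter ρ w i ^ 2 = stackInner ρ w i ^ 2 + 2 * w i := by
  classical
  have h : univ.filter (fun j => ρ j ≤ ρ i) = insert i (univ.filter fun j => ρ j < ρ i) := by
    ext j
    simp [le_iff_lt_or_eq, hρ.eq_iff, or_comm]
  rw [stackOuter, stackInner, Real.sq_sqrt, Real.sq_sqrt, h, sum_insert (by simp)]
  · ring
  all_goals exact mul_nonneg two_pos.le (sum_nonneg fun j _ => hw j)

lemma stackInner_lt_stackOuter (hρ : ρ.Injective) (hw : 0 ≤ w) {i : ι} (hi : 0 < w i) :
    stackInner ρ w i < stackOuter ρ w i :=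
  lt_of_pow_lt_pow_left₀ 2 (stackOuter_nonneg ρ w i) (by rw [stackOuter_sq hρ hw]; linarith)

lemma exists_stackOuter_eq (hw : 0 ≤ w) (s : Finset ι)
    (hs : ∀ i ∈ s, ∀ j, ρ j ≤ ρ i → j ∈ s) :
    √(2 * ∑ j ∈ s, w j) = 0 ∨ ∃ i ∈ s, 0 < w i ∧ stackOuter ρ w i = √(2 * ∑ j ∈ s, w j) := by
  have hz : ∀ j, ¬ 0 < w j → w j = 0 := fun j h => le_antisymm (not_lt.1 h) (hw j)
  rcases (s.filter fun j => 0 < w j).eq_empty_or_nonempty with h | h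
  · left
    rw [sum_eq_zero fun j hj => hz j fun h0 => ?_, mul_zero, Real.sqrt_zero]
    exact notMem_empty j (h ▸ mem_filter.2 ⟨hj, h0⟩)
  · right
    obtain ⟨i, hi, hmax⟩ := exists_max_image _ ρ h
    obtain ⟨his, hwi⟩ := mem_filter.1 hi
    refine ⟨i, his, hwi, ?_⟩
    rw [stackOuter, sum_subset (fun j hj => hs i his j (mem_filter.1 hj).2) fun j hj hj' => ?_]
    refine hz j fun h0 => hj' (mem_filter.2 ⟨mem_univ j, hmax j (mem_filter.2 ⟨hj, h0⟩)⟩)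

lemma stackInner_eq_zero_or (hw : 0 ≤ w) (i : ι) :
    stackInner ρ w i = 0 ∨ ∃ j, ρ j < ρ i ∧ 0 < w j ∧ stackOuter ρ w j = stackInner ρ w i := by
  have h := exists_stackOuter_eq (ρ := ρ) hw (univ.filter fun j => ρ j < ρ i) fun l hl j hj =>
    mem_filter.2 ⟨mem_univ j, hj.trans_lt (mem_filter.1 hl).2⟩
  simpa only [mem_filter, mem_univ, true_and, stackInner] using h

lemma stackOuter_le_total (hw : 0 ≤ w) (i : ι) : stackOuter ρ w i ≤ √(2 * ∑ j, w j) :=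
  Real.sqrt_le_sqrt <| mul_le_mul_of_nonneg_left (sum_le_sum_of_subset_of_nonneg
    (filter_subset _ _) fun l _ _ => hw l) two_pos.le

lemma exists_mem_Icc_stack (hw : 0 ≤ w) (hpos : ∃ i, 0 < w i) {x : ℝ} (hx0 : 0 ≤ x)
    (hx : x ≤ √(2 * ∑ j, w j)) :
    ∃ i, 0 < w i ∧ x ∈ Set.Icc (stackInner ρ w i) (stackOuter ρ w i) := by
  have hne : (univ.filter fun i => 0 < w i ∧ x ≤ stackOuter ρ w i).Nonempty := by
    obtain ⟨l, hl⟩ := hpos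
    rcases exists_stackOuter_eq (ρ := ρ) hw univ fun _ _ j _ => mem_univ j with h | ⟨i, -, hi, h⟩
    · exact ⟨l, mem_filter.2 ⟨mem_univ l, hl, (hx.trans h.le).trans (stackOuter_nonneg ρ w l)⟩⟩
    · exact ⟨i, mem_filter.2 ⟨mem_univ i, hi, hx.trans h.ge⟩⟩
  obtain ⟨i, hi, hmin⟩ := exists_min_image _ ρ hne
  obtain ⟨-, hwi, hxi⟩ := mem_filter.1 hi
  refine ⟨i, hwi, ?_, hxi⟩
  rcases stackInner_eq_zero_or (ρ := ρ) hw i with h | ⟨j, hji, hj, h⟩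
  · exact h.trans_le hx0
  · by_contra! hlt
    exact (hmin j (mem_filter.2 ⟨mem_univ j, hj, hlt.le.trans h.ge⟩)).not_gt hji

end Stack

lemma Config.exists_sum_stackOuter_le {n k : ℕ} (C : Config n k) :
    ∃ ρ : Equiv.Perm (Fin n), ∑ i, stackOuter ρ C.rightMass i ≤
      ∑ x ∈ C.endpointSet.filter (fun x => 0 < x), |x| := by
  refine ⟨(Tuple.sort C.rightEnd)⁻¹, (sum_le_sum fun i _ => ?_).trans C.sum_rightEnd_le⟩
  rw [stackOuter]
  refine Real.sqrt_le_iff.2 ⟨C.rightEnd_nonneg i, ?_⟩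
  have h := C.sum_rightMass_le
    (univ.filter fun j => (Tuple.sort C.rightEnd)⁻¹ j ≤ (Tuple.sort C.rightEnd)⁻¹ i)
    (C.rightEnd i) fun j hj => by
      simpa using Tuple.monotone_sort C.rightEnd (mem_filter.1 hj).2
  rw [posPrimitive, max_eq_left (C.rightEnd_nonneg i)] at h
  linarith

lemma sum_abs_le_of_forall_exists_eq {κ : Type*} [Fintype κ] [Nonempty κ] (E : Finset ℝ)
    (g : κ → ℝ) (h : ∀ x ∈ E, x ≠ 0 → ∃ i, g i = x) : ∑ x ∈ E, |x| ≤ ∑ i, |g i| := by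
  classical
  choose! f hf using h
  have hf' : ∀ x ∈ E.filter (fun x => x ≠ 0), g (f x) = x := fun x hx =>
    hf x (mem_filter.1 hx).1 (mem_filter.1 hx).2
  have hinj : Set.InjOn f (E.filter fun x => x ≠ 0) := fun x hx y hy hxy => by
    rw [← hf' x hx, ← hf' y hy, hxy]
  calc ∑ x ∈ E, |x| = ∑ x ∈ E.filter (fun x => x ≠ 0), |x| :=
        (sum_filter_of_ne fun x _ hx => abs_ne_zero.1 hx).symm
    _ = ∑ x ∈ E.filter (fun x => x ≠ 0), |g (f x)| :=
        sum_congr rfl fun x hx => by rw [hf' x hx]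
    _ = ∑ i ∈ (E.filter fun x => x ≠ 0).image f, |g i| := (sum_image (f := fun i => |g i|) hinj).symm
    _ ≤ ∑ i, |g i| := sum_le_univ_sum_of_nonneg fun i => abs_nonneg _

/-- Stacking the regions with `0 < v i` to the left and those with `0 < u i` to the right of the
origin gives a condensed configuration with one interval for each region of positive mass. -/
lemma exists_condensed_of_stacks {n : ℕ} (σ τ : Equiv.Perm (Fin n)) {v u : Fin n → ℝ}
    (hv : 0 ≤ v) (hu : 0 ≤ u) (hvu : ∀ i, v i = 0 ∨ u i = 0) (hpos : ∃ i, 0 < v i ∨ 0 < u i) :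
    ∃ (k : ℕ) (C : Config n k), k ≤ n ∧ C.Condensed ∧ (∀ i, C.mass i = v i + u i) ∧
      C.perim ≤ ∑ i, stackOuter σ v i + ∑ i, stackOuter τ u i := by
  obtain ⟨k, hk, f, hf, hfv⟩ : ∃ k ≤ n, ∃ f : Fin k → Fin n, f.Injective ∧
      ∀ i, (∃ j, f j = i) ↔ 0 < v i ∨ 0 < u i := by
    let T := univ.filter fun i => 0 < v i ∨ 0 < u i
    refine ⟨T.card, (card_le_univ T).trans_eq (Fintype.card_fin n), T.orderEmbOfFin rfl,
      (T.orderEmbOfFin rfl).injective, fun i => ?_⟩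
    rw [← Set.mem_range, T.range_orderEmbOfFin rfl, mem_coe, mem_filter, and_iff_right (mem_univ i)]
  have hcase : ∀ j, (0 < v (f j) ∧ u (f j) = 0) ∨ (¬ 0 < v (f j) ∧ v (f j) = 0 ∧ 0 < u (f j)) :=
    fun j => by
      have h1 := (hfv (f j)).1 ⟨j, rfl⟩
      rcases hvu (f j) with h | h
      · exact Or.inr ⟨h.not_gt, h, h1.resolve_left h.not_gt⟩
      · exact Or.inl ⟨h1.resolve_right h.not_gt, h⟩
  let lo : Fin k → ℝ := fun j =>
    if 0 < v (f j) then -stackOuter σ v (f j) else stackInner τ u (f j)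
  let hi : Fin k → ℝ := fun j =>
    if 0 < v (f j) then -stackInner σ v (f j) else stackOuter τ u (f j)
  have hlo : ∀ {j}, 0 < v (f j) → lo j = -stackOuter σ v (f j) := fun h => if_pos h
  have hlo' : ∀ {j}, ¬ 0 < v (f j) → lo j = stackInner τ u (f j) := fun h => if_neg h
  have hhi : ∀ {j}, 0 < v (f j) → hi j = -stackInner σ v (f j) := fun h => if_pos h
  have hhi' : ∀ {j}, ¬ 0 < v (f j) → hi j = stackOuter τ u (f j) := fun h => if_neg h
  have hsep : ∀ i j, i ≠ j → hi i ≤ lo j ∨ hi j ≤ lo i := by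
    intro i j hij
    rcases hcase i with ⟨hi0, -⟩ | ⟨hi0, -⟩ <;> rcases hcase j with ⟨hj0, -⟩ | ⟨hj0, -⟩
    · rw [hlo hi0, hlo hj0, hhi hi0, hhi hj0, neg_le_neg_iff, neg_le_neg_iff]
      exact (lt_or_gt_of_ne (σ.injective.ne (hf.ne hij))).symm.imp
        (stackOuter_le_stackInner hv) (stackOuter_le_stackInner hv)
    · rw [hhi hi0, hlo' hj0]
      exact Or.inl ((neg_nonpos.2 (stackInner_nonneg _ _ _)).trans (stackInner_nonneg _ _ _))
    · rw [hhi hj0, hlo' hi0]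
      exact Or.inr ((neg_nonpos.2 (stackInner_nonneg _ _ _)).trans (stackInner_nonneg _ _ _))
    · rw [hlo' hi0, hlo' hj0, hhi' hi0, hhi' hj0]
      exact (lt_or_gt_of_ne (τ.injective.ne (hf.ne hij))).imp
        (stackOuter_le_stackInner hu) (stackOuter_le_stackInner hu)
  let C : Config n k :=
    { lo := lo
      hi := hi
      lab := f
      nondeg := fun j => by
        rcases hcase j with ⟨h, -⟩ | ⟨h, -, h'⟩
        · rw [hlo h, hhi h, neg_lt_neg_iff]
          exact stackInner_lt_stackOuter σ.injective hv h
        · rw [hlo' h, hhi' h]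
          exact stackInner_lt_stackOuter τ.injective hu h'
      disj := fun i j hij => Config.Ioo_inter_Ioo_eq_empty (hsep i j hij) }
  have hleft : (∃ i, 0 < v i) → ∀ x, -√(2 * ∑ i, v i) ≤ x → x ≤ 0 →
      ∃ j, x ∈ Set.Icc (lo j) (hi j) := by
    intro hne x hx hx0
    obtain ⟨i, hvi, h1, h2⟩ := exists_mem_Icc_stack (ρ := σ) hv hne (neg_nonneg.2 hx0)
      (neg_le.1 hx)
    obtain ⟨j, rfl⟩ := (hfv i).2 (Or.inl hvi)
    exact ⟨j, by rw [hlo hvi, hhi hvi]; exact ⟨neg_le.1 h2, le_neg.1 h1⟩⟩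
  have hright : (∃ i, 0 < u i) → ∀ x, 0 ≤ x → x ≤ √(2 * ∑ i, u i) →
      ∃ j, x ∈ Set.Icc (lo j) (hi j) := by
    intro hne x hx0 hx
    obtain ⟨i, hui, h⟩ := exists_mem_Icc_stack (ρ := τ) hu hne hx0 hx
    obtain ⟨j, rfl⟩ := (hfv i).2 (Or.inr hui)
    have hvi : ¬ 0 < v (f j) := ((hvu (f j)).resolve_right hui.ne').not_gt
    exact ⟨j, by rwa [hlo' hvi, hhi' hvi]⟩
  have hzero : ∀ w : Fin n → ℝ, 0 ≤ w → (¬ ∃ i, 0 < w i) → √(2 * ∑ i, w i) = 0 := by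
    intro w hw h
    rw [sum_eq_zero fun i _ => le_antisymm (not_lt.1 fun h0 => h ⟨i, h0⟩) (hw i), mul_zero,
      Real.sqrt_zero]
  refine ⟨k, C, hk, ⟨⟨-√(2 * ∑ i, v i), √(2 * ∑ i, u i), neg_nonpos.2 (Real.sqrt_nonneg _),
    Real.sqrt_nonneg _, Set.Subset.antisymm (Set.iUnion_subset fun j => ?_) fun x hx => ?_⟩,
    fun i => ⟨?_, ?_⟩⟩, fun i => ?_, ?_⟩
  · rcases hcase j with ⟨h, -⟩ | ⟨h, -⟩
    · change Set.Icc (lo j) (hi j) ⊆ _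
      rw [hlo h, hhi h]
      exact Set.Icc_subset_Icc (neg_le_neg (stackOuter_le_total hv _))
        ((neg_nonpos.2 (stackInner_nonneg _ _ _)).trans (Real.sqrt_nonneg _))
    · change Set.Icc (lo j) (hi j) ⊆ _
      rw [hlo' h, hhi' h]
      exact Set.Icc_subset_Icc
        ((neg_nonpos.2 (Real.sqrt_nonneg _)).trans (stackInner_nonneg _ _ _))
        (stackOuter_le_total hu _)
  · rw [Set.mem_iUnion]
    change ∃ j, x ∈ Set.Icc (lo j) (hi j)
    by_cases hne : ∃ i, 0 < v i
    · rcases le_or_gt x 0 with h0 | h0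
      · exact hleft hne x hx.1 h0
      · refine hright (by_contra fun hne' => ?_) x h0.le hx.2
        exact (hx.2.trans_eq (hzero u hu hne')).not_gt h0
    · have hx1 := hx.1
      rw [hzero v hv hne, neg_zero] at hx1
      refine hright ?_ x hx1 hx.2
      obtain ⟨i, hi⟩ := hpos
      exact ⟨i, hi.resolve_left fun h => hne ⟨i, h⟩⟩
  · exact card_le_one.2 fun a ha b hb =>
      hf ((mem_filter.1 ha).2.1.trans (mem_filter.1 hb).2.1.symm)
  · exact card_le_one.2 fun a ha b hb =>
      hf ((mem_filter.1 ha).2.1.trans (mem_filter.1 hb).2.1.symm)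
  · have hint : ∀ j, ∫ x in lo j..hi j, |x| = v (f j) + u (f j) := by
      intro j
      rw [integral_abs_eq]
      rcases hcase j with ⟨h, h'⟩ | ⟨h, h', -⟩
      · rw [hlo h, hhi h, h', neg_neg, neg_neg]
        have h1 := stackOuter_sq σ.injective hv (f j)
        simp only [posPrimitive, max_eq_left (stackOuter_nonneg _ _ _),
          max_eq_left (stackInner_nonneg _ _ _),
          max_eq_right (neg_nonpos.2 (stackOuter_nonneg _ _ _)),
          max_eq_right (neg_nonpos.2 (stackInner_nonneg _ _ _))]
        linarith
      · rw [hlo' h, hhi' h, h']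
        have h1 := stackOuter_sq τ.injective hu (f j)
        simp only [posPrimitive, max_eq_left (stackOuter_nonneg _ _ _),
          max_eq_left (stackInner_nonneg _ _ _),
          max_eq_right (neg_nonpos.2 (stackOuter_nonneg _ _ _)),
          max_eq_right (neg_nonpos.2 (stackInner_nonneg _ _ _))]
        linarith
    change ∑ j ∈ univ.filter (fun j => f j = i), ∫ x in lo j..hi j, |x| = _
    simp only [hint]
    by_cases h : ∃ j, f j = i
    · obtain ⟨j, rfl⟩ := h
      simp only [hf.eq_iff, filter_eq', mem_univ, if_true, sum_singleton]
    · rw [filter_false_of_mem fun j _ hj => h ⟨j, hj⟩, sum_empty]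
      rw [hfv, not_or, not_lt, not_lt] at h
      rw [le_antisymm h.1 (hv i), le_antisymm h.2 (hu i), add_zero]
  · obtain ⟨i₀, -⟩ := hpos
    have : Nonempty (Fin n ⊕ Fin n) := ⟨Sum.inl i₀⟩
    have h := sum_abs_le_of_forall_exists_eq C.endpointSet
      (Sum.elim (fun i => -stackOuter σ v i) (stackOuter τ u)) fun x hx hx0 => by
        rw [Sum.exists]
        simp only [Sum.elim_inl, Sum.elim_inr]
        rcases mem_union.1 hx with hx | hx <;> obtain ⟨j, -, rfl⟩ := mem_image.1 hx <;>
          rcases hcase j with ⟨hj, -⟩ | ⟨hj, -⟩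
        · exact Or.inl ⟨f j, (hlo hj).symm⟩
        · change lo j ≠ 0 at hx0
          rw [hlo' hj] at hx0
          obtain ⟨l, -, -, hl⟩ := (stackInner_eq_zero_or hu _).resolve_left hx0
          exact Or.inr ⟨l, hl.trans (hlo' hj).symm⟩
        · change hi j ≠ 0 at hx0
          rw [hhi hj, neg_ne_zero] at hx0
          obtain ⟨l, -, -, hl⟩ := (stackInner_eq_zero_or hv _).resolve_left hx0
          exact Or.inl ⟨l, (congrArg Neg.neg hl).trans (hhi hj).symm⟩
        · exact Or.inr ⟨f j, (hhi' hj).symm⟩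
    simpa only [Config.perim, Fintype.sum_sum_type, Sum.elim_inl, Sum.elim_inr, abs_neg,
      abs_of_nonneg (stackOuter_nonneg _ _ _)] using h

/-- Concavity of the perimeter of two stacks as a function of how the masses `m` are divided
between them: some division giving each region entirely to one stack is at least as good. -/
lemma exists_unsplit_stackOuter_le {ι α : Type*} [Fintype ι] [LinearOrder α] (σ τ : ι → α)
    {a b : ι → ℝ} (ha : 0 ≤ a) (hb : 0 ≤ b) :
    ∃ v u : ι → ℝ, 0 ≤ v ∧ 0 ≤ u ∧ (∀ i, v i = 0 ∨ u i = 0) ∧ v + u = a + b ∧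
      ∑ i, stackOuter σ v i + ∑ i, stackOuter τ u i ≤
        ∑ i, stackOuter σ a i + ∑ i, stackOuter τ b i := by
  have hconc : ConcaveOn ℝ (Set.Icc 0 (a + b)) fun w =>
      ∑ i, stackOuter σ w i + ∑ i, stackOuter τ (a + b - w) i := by
    refine ((concaveOn_sum_stackOuter σ).subset (fun _ h => h.1) (convex_Icc _ _)).add
      ⟨convex_Icc _ _, fun x hx y hy s t hs ht hst => ?_⟩
    have h := (concaveOn_sum_stackOuter τ).2 (x := a + b - x) (y := a + b - y)
      (sub_nonneg.2 hx.2) (sub_nonneg.2 hy.2) hs ht hst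
    have he : a + b - (s • x + t • y) = s • (a + b - x) + t • (a + b - y) := by
      rw [smul_sub, smul_sub, sub_add_sub_comm, ← add_smul, hst, one_smul]
    beta_reduce
    rwa [he]
  have hmem : a ∈ convexHull ℝ (Set.univ.pi fun i => {0, a i + b i}) := by
    rw [convexHull_pi]
    intro i _
    beta_reduce
    rw [convexHull_pair, segment_eq_Icc (add_nonneg (ha i) (hb i))]
    exact ⟨ha i, le_add_of_nonneg_right (hb i)⟩
  have hsub : (Set.univ.pi fun i => {0, a i + b i}) ⊆ Set.Icc 0 (a + b) := by
    intro w hw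
    have hw' : ∀ i, w i = 0 ∨ w i = a i + b i := fun i => hw i trivial
    have hab : ∀ i, 0 ≤ a i + b i := fun i => add_nonneg (ha i) (hb i)
    exact ⟨fun i => (hw' i).elim (fun h => h.ge) fun h => (hab i).trans_eq h.symm,
      fun i => (hw' i).elim (fun h => h.trans_le (hab i)) fun h => h.le⟩
  obtain ⟨v, hv, hle⟩ := hconc.exists_le_of_mem_convexHull hsub hmem
  have hv' : ∀ i, v i = 0 ∨ v i = a i + b i := fun i => hv i trivial
  refine ⟨v, a + b - v, (hsub hv).1, sub_nonneg.2 (hsub hv).2,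
    fun i => (hv' i).imp_right fun h => ?_, add_sub_cancel _ _, by simpa using hle⟩
  simp [h]

/-- For `n ≥ 2`, every (nonempty) configuration of `n` regions on `ℝ` with density
`|x|` can be replaced by a condensed configuration with the same list of weighted
masses, at most `2n − 2` intervals, and total weighted perimeter at most that of the
original. In particular an isoperimetric `n`-bubble is condensed with at most `2n − 2`
adjacent intervals. -/
theorem condense_to_two_n_sub_two (n k : ℕ) (hn : 2 ≤ n) (hk : 0 < k)
    (C : Config n k) :
    ∃ (k' : ℕ) (C' : Config n k'),
      k' ≤ 2 * n - 2 ∧ C'.Condensed ∧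
      (∀ i, C'.mass i = C.mass i) ∧
      C'.perim ≤ C.perim := by
  obtain ⟨τ, hτ⟩ := C.exists_sum_stackOuter_le
  obtain ⟨σ, hσ⟩ := C.reflect.exists_sum_stackOuter_le
  obtain ⟨v, u, hv, hu, hvu, hsum, hle⟩ := exists_unsplit_stackOuter_le σ τ
    C.reflect.rightMass_nonneg C.rightMass_nonneg
  have hmass : ∀ i, v i + u i = C.mass i := fun i => by
    rw [C.mass_eq, add_comm (C.rightMass i)]
    exact congrFun hsum i
  have hpos : ∃ i, 0 < v i ∨ 0 < u i := by
    refine ⟨C.lab ⟨0, hk⟩, ?_⟩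
    by_contra! h
    have := hmass (C.lab ⟨0, hk⟩)
    have := C.mass_lab_pos ⟨0, hk⟩
    linarith
  obtain ⟨k', C', hk', hcond, hmass', hperim⟩ := exists_condensed_of_stacks σ τ hv hu hvu hpos
  refine ⟨k', C', by omega, hcond, fun i => (hmass' i).trans (hmass i), ?_⟩
  rw [C.perim_eq]
  linarith
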